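/- For any positive real r and any polygon (measurable region) of area P in the plane, any trajectory such that every point of the region is within distance r of the trajectory must have length at least (P − πr²)/(2r). -/

import Mathlib

/-!
When a ball of radius `r` moves from `p` to `q`, each line in the direction `q - p` meets it in an
interval that is shifted by `dist q p`, so by Fubini the newly covered volume is at most `dist q p`
times the volume of the projection of the ball to a hyperplane. Adding up along finitely many points
of the curve, the balls around them have total volume at most that of one ball plus the cross
section times the variation of the curve. Compactness carries this bound over to open neighborhoods
of the whole curve, and letting the radius decrease to `r` gives closed ones.
-/

open MeasureTheory Real

open Set Metric Module Filter Topology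

theorem volume_preimage_sub_sdiff_le {I : Set ℝ} (hI : I.OrdConnected) (d : ℝ) :
    volume ((· - d) ⁻¹' I \ I) ≤ ‖d‖ₑ := by
  refine (Real.volume_le_diam _).trans (ediam_le fun s hs t ht => ?_)
  wlog hst : s ≤ t generalizing s t
  · rw [edist_comm]
    exact this t ht s hs (le_of_not_ge hst)
  rw [edist_dist, ← ofReal_norm, Real.dist_eq, abs_sub_comm, abs_of_nonneg (sub_nonneg.2 hst)]
  refine ENNReal.ofReal_le_ofReal ?_
  by_contra! hlt
  -- One of `s`, `t` lies between the points `s - d` and `t - d` of `I`.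
  rcases le_total 0 d with hd | hd
  · rw [Real.norm_of_nonneg hd] at hlt
    exact hs.2 (hI.out hs.1 ht.1 ⟨by linarith, by linarith⟩)
  · rw [Real.norm_of_nonpos hd] at hlt
    exact ht.2 (hI.out hs.1 ht.1 ⟨by linarith, by linarith⟩)

theorem prod_preimage_sub_sdiff_le {F : Type*} [MeasurableSpace F] (μ : Measure F) [SFinite μ]
    {K : Set (ℝ × F)} (hK : MeasurableSet K) (hslice : ∀ y, ((·, y) ⁻¹' K).OrdConnected) (d : ℝ) :
    (volume.prod μ) (Prod.map (· - d) id ⁻¹' K \ K) ≤ ‖d‖ₑ * μ (Prod.snd '' K) := by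
  have hmeas : MeasurableSet (Prod.map (· - d) id ⁻¹' K \ K) :=
    (hK.preimage (by fun_prop)).diff hK
  rw [Measure.prod_apply_symm hmeas]
  refine (lintegral_mono fun y => ?_).trans (lintegral_indicator_const_le (Prod.snd '' K) ‖d‖ₑ)
  by_cases hy : y ∈ Prod.snd '' K
  · rw [indicator_of_mem hy]
    exact volume_preimage_sub_sdiff_le (hslice y) d
  · have hempty : (·, y) ⁻¹' (Prod.map (· - d) id ⁻¹' K \ K) = ∅ :=
      eq_empty_of_forall_notMem fun t ht => hy ⟨_, ht.1, rfl⟩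
    simp [hempty]

theorem exists_linearIsometryEquiv_apply_eq {E G : Type*} [NormedAddCommGroup E]
    [InnerProductSpace ℝ E] [FiniteDimensional ℝ E] [NormedAddCommGroup G] [InnerProductSpace ℝ G]
    [FiniteDimensional ℝ G] (h : finrank ℝ E = finrank ℝ G) {v : E} {w : G} (hvw : ‖v‖ = ‖w‖) :
    ∃ e : E ≃ₗᵢ[ℝ] G, e v = w := by
  let e₀ : E ≃ₗᵢ[ℝ] G := (stdOrthonormalBasis ℝ E).equiv (stdOrthonormalBasis ℝ G) (finCongr h)
  exact ⟨e₀.trans (Submodule.reflection (ℝ ∙ (e₀ v - w))ᗮ),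
    Submodule.reflection_sub ((e₀.norm_map v).trans hvw)⟩

theorem tendsto_measure_closedBall_nhdsGT {X : Type*} [PseudoMetricSpace X] [ProperSpace X]
    [MeasurableSpace X] [OpensMeasurableSpace X] (μ : Measure X) [IsFiniteMeasureOnCompacts μ]
    (x : X) (r : ℝ) :
    Tendsto (fun ρ => μ (closedBall x ρ)) (𝓝[>] r) (𝓝 (μ (closedBall x r))) := by
  rw [← biInter_gt_closedBall x r]
  exact tendsto_measure_biInter_gt (fun _ _ => measurableSet_closedBall.nullMeasurableSet)
    (fun _ _ _ hle => closedBall_subset_closedBall hle)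
    ⟨r + 1, by simp, measure_closedBall_lt_top.ne⟩

section Variation

variable {α E : Type*} [LinearOrder α] [PseudoEMetricSpace E]

theorem eVariationOn_add_edist_le_insert (f : α → E) {s : Set α} {m a : α}
    (hm : IsGreatest s m) (hma : m ≤ a) :
    eVariationOn f s + edist (f m) (f a) ≤ eVariationOn f (insert a s) := by
  have hunion : insert a s = s ∪ {m, a} := by grind [hm.1]
  have hleast : IsLeast {m, a} m := by simpa [IsLeast] using hma
  rw [hunion, eVariationOn.union f hm hleast]
  gcongr
  exact eVariationOn.edist_le f (by simp) (by simp)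

theorem eVariationOn_Icc_le_of_lipschitzOnWith {f : ℝ → E} {C : NNReal} {a b : ℝ}
    (hf : LipschitzOnWith C f (Icc a b)) :
    eVariationOn f (Icc a b) ≤ C * ENNReal.ofReal (b - a) := by
  simpa using hf.comp_eVariationOn_le (mapsTo_id _)

end Variation

section Tube

variable {E F α : Type*}
  [NormedAddCommGroup E] [InnerProductSpace ℝ E] [FiniteDimensional ℝ E]
  [MeasurableSpace E] [BorelSpace E]
  [NormedAddCommGroup F] [InnerProductSpace ℝ F] [FiniteDimensional ℝ F]
  [MeasurableSpace F] [BorelSpace F]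
  [LinearOrder α]

theorem volume_preimage_sub_toLp_closedBall_sdiff_le (d r : ℝ) :
    volume (Prod.map (· - d) id ⁻¹' (WithLp.toLp 2 ⁻¹' closedBall (0 : WithLp 2 (ℝ × F)) r) \
      WithLp.toLp 2 ⁻¹' closedBall 0 r) ≤ ‖d‖ₑ * volume (closedBall (0 : F) r) := by
  set K : Set (ℝ × F) := WithLp.toLp 2 ⁻¹' closedBall 0 r
  have hconv : Convex ℝ K :=
    (convex_closedBall _ _).linear_preimage (WithLp.linearEquiv 2 ℝ (ℝ × F)).symm.toLinearMap
  have hslice (y : F) : ((·, y) ⁻¹' K).OrdConnected := by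
    have hline : (·, y) = AffineMap.lineMap (k := ℝ) ((0 : ℝ), y) (1, y) := by
      ext t <;> simp [AffineMap.lineMap_apply]
    rw [hline]
    exact (hconv.affine_preimage _).ordConnected
  have hproj : Prod.snd '' K ⊆ closedBall 0 r := by
    rintro _ ⟨z, hz, rfl⟩
    rw [mem_closedBall_zero_iff]
    exact (WithLp.norm_snd_le (x := WithLp.toLp 2 z)).trans (mem_closedBall_zero_iff.1 hz)
  calc volume (Prod.map (· - d) id ⁻¹' K \ K)
      ≤ ‖d‖ₑ * volume (Prod.snd '' K) :=
        prod_preimage_sub_sdiff_le volume (measurableSet_closedBall.preimage (by fun_prop)) hslice d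
    _ ≤ ‖d‖ₑ * volume (closedBall (0 : F) r) := by gcongr

theorem volume_closedBall_sdiff_closedBall_le (hF : finrank ℝ E = finrank ℝ F + 1) (q p : E)
    (r : ℝ) :
    volume (closedBall q r \ closedBall p r) ≤ edist q p * volume (closedBall (0 : F) r) := by
  have hdim : finrank ℝ E = finrank ℝ (WithLp 2 (ℝ × F)) := by
    rw [(WithLp.linearEquiv 2 ℝ (ℝ × F)).finrank_eq, finrank_prod, finrank_self, hF, add_comm]
  obtain ⟨e, he⟩ := exists_linearIsometryEquiv_apply_eq hdim
    (v := q - p) (w := WithLp.toLp 2 (‖q - p‖, 0)) (by simp)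
  let φ : E → ℝ × F := fun z => (e (z - p)).ofLp
  have hφ : MeasurePreserving φ := (WithLp.volume_preserving_ofLp ℝ F).comp
    (e.measurePreserving.comp (measurePreserving_sub_right volume p))
  let K : Set (ℝ × F) := WithLp.toLp 2 ⁻¹' closedBall 0 r
  have hK : MeasurableSet K := measurableSet_closedBall.preimage (by fun_prop)
  have hp : closedBall p r = φ ⁻¹' K := by
    ext z
    simp [φ, K, dist_eq_norm, -map_sub]
  have hq : closedBall q r = φ ⁻¹' (Prod.map (· - ‖q - p‖) id ⁻¹' K) := by
    ext z
    have hz : WithLp.toLp 2 (Prod.map (· - ‖q - p‖) id (φ z)) = e (z - q) := by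
      rw [← sub_sub_sub_cancel_right z q p, map_sub, he]
      simp [φ, WithLp.ext_iff, Prod.ext_iff]
    rw [mem_preimage, mem_preimage, mem_preimage, hz, mem_closedBall_zero_iff, e.norm_map,
      mem_closedBall_iff_norm]
  calc volume (closedBall q r \ closedBall p r)
      = volume (Prod.map (· - ‖q - p‖) id ⁻¹' K \ K) := by
        rw [hp, hq, ← preimage_sdiff, hφ.measure_preimage]
        exact ((hK.preimage (by fun_prop)).diff hK).nullMeasurableSet
    _ ≤ ‖‖q - p‖‖ₑ * volume (closedBall (0 : F) r) :=
        volume_preimage_sub_toLp_closedBall_sdiff_le _ _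
    _ = edist q p * volume (closedBall (0 : F) r) := by rw [enorm_norm, ← edist_eq_enorm_sub]

theorem volume_biUnion_finset_closedBall_le (hF : finrank ℝ E = finrank ℝ F + 1) (γ : α → E)
    (T : Finset α) (r : ℝ) :
    volume (⋃ t ∈ T, closedBall (γ t) r) ≤
      volume (closedBall (0 : E) r) + eVariationOn γ T * volume (closedBall (0 : F) r) := by
  induction T using Finset.induction_on_max with
  | empty => simp
  | insert a T ha ih =>
    rcases T.eq_empty_or_nonempty with rfl | hT
    · simp [Measure.addHaar_closedBall_center]
    set m := T.max' hT
    set U := ⋃ t ∈ T, closedBall (γ t) r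
    have hm : m ∈ T := T.max'_mem hT
    have hvar : eVariationOn γ T + edist (γ a) (γ m) ≤ eVariationOn γ ↑(insert a T) := by
      rw [edist_comm, Finset.coe_insert]
      exact eVariationOn_add_edist_le_insert γ (T.isGreatest_max' hT) (ha m hm).le
    calc volume (⋃ t ∈ insert a T, closedBall (γ t) r)
        = volume (U ∪ closedBall (γ a) r \ U) := by
          rw [Finset.set_biUnion_insert, union_comm, union_sdiff_self]
      _ ≤ volume U + volume (closedBall (γ a) r \ closedBall (γ m) r) := by
          refine (measure_union_le _ _).trans ?_
          gcongr
          exact subset_biUnion_of_mem (u := fun t => closedBall (γ t) r) hm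
      _ ≤ volume (closedBall (0 : E) r) + eVariationOn γ T * volume (closedBall (0 : F) r) +
            edist (γ a) (γ m) * volume (closedBall (0 : F) r) := by
          gcongr
          exact volume_closedBall_sdiff_closedBall_le hF _ _ _
      _ ≤ volume (closedBall (0 : E) r) +
            eVariationOn γ ↑(insert a T) * volume (closedBall (0 : F) r) := by
          rw [add_assoc, ← add_mul]
          gcongr

theorem volume_thickening_image_le (hF : finrank ℝ E = finrank ℝ F + 1) (γ : α → E)
    (s : Set α) (r : ℝ) :
    volume (thickening r (γ '' s)) ≤
      volume (closedBall (0 : E) r) + eVariationOn γ s * volume (closedBall (0 : F) r) := by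
  rw [isOpen_thickening.measure_eq_iSup_isCompact]
  refine iSup₂_le fun C hCs => iSup_le fun hC => ?_
  rw [thickening_eq_biUnion_ball, biUnion_image] at hCs
  obtain ⟨T, hTs, hT, hCT⟩ := hC.elim_finite_subcover_image (fun _ _ => isOpen_ball) hCs
  lift T to Finset α using hT
  calc volume C ≤ volume (⋃ t ∈ T, closedBall (γ t) r) :=
        measure_mono (hCT.trans (iUnion₂_mono fun _ _ => ball_subset_closedBall))
    _ ≤ volume (closedBall (0 : E) r) + eVariationOn γ T * volume (closedBall (0 : F) r) :=
        volume_biUnion_finset_closedBall_le hF γ T r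
    _ ≤ volume (closedBall (0 : E) r) + eVariationOn γ s * volume (closedBall (0 : F) r) := by
        gcongr
        exact eVariationOn.mono γ hTs

theorem volume_biUnion_closedBall_le (hF : finrank ℝ E = finrank ℝ F + 1) {γ : α → E}
    {s : Set α} (hγ : BoundedVariationOn γ s) (r : ℝ) :
    volume (⋃ t ∈ s, closedBall (γ t) r) ≤
      volume (closedBall (0 : E) r) + eVariationOn γ s * volume (closedBall (0 : F) r) := by
  have hlim := (tendsto_measure_closedBall_nhdsGT volume (0 : E) r).add
    (ENNReal.Tendsto.const_mul (tendsto_measure_closedBall_nhdsGT volume (0 : F) r) (.inr hγ))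
  refine ge_of_tendsto hlim ?_
  filter_upwards [self_mem_nhdsWithin] with ρ hρ
  refine (measure_mono ?_).trans (volume_thickening_image_le hF γ s ρ)
  rw [thickening_eq_biUnion_ball, biUnion_image]
  exact iUnion₂_mono fun _ _ => closedBall_subset_ball hρ

theorem length_ge_of_cover_general (hF : finrank ℝ E = finrank ℝ F + 1) {r x : ℝ} (hr : 0 < r)
    (hx : 0 ≤ x) {γ : α → E} {s : Set α} (hγ : eVariationOn γ s ≤ ENNReal.ofReal x) {P : Set E}
    (hcover : ∀ p ∈ P, ∃ t ∈ s, dist p (γ t) ≤ r) :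
    (volume.real P - volume.real (closedBall (0 : E) r)) / volume.real (closedBall (0 : F) r) ≤
      x := by
  have hE : volume (closedBall (0 : E) r) ≠ ⊤ := measure_closedBall_lt_top.ne
  have hcross : volume (closedBall (0 : F) r) ≠ ⊤ := measure_closedBall_lt_top.ne
  have hcross_pos : 0 < volume.real (closedBall (0 : F) r) :=
    ENNReal.toReal_pos (measure_closedBall_pos volume 0 hr).ne' hcross
  have hswept : ENNReal.ofReal x * volume (closedBall (0 : F) r) ≠ ⊤ :=
    ENNReal.mul_ne_top ENNReal.ofReal_ne_top hcross
  have htube : volume P ≤ volume (closedBall (0 : E) r) +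
      ENNReal.ofReal x * volume (closedBall (0 : F) r) := calc
    volume P ≤ volume (⋃ t ∈ s, closedBall (γ t) r) :=
      measure_mono fun p hp => by simpa using hcover p hp
    _ ≤ volume (closedBall (0 : E) r) + eVariationOn γ s * volume (closedBall (0 : F) r) :=
      volume_biUnion_closedBall_le hF (ne_top_of_le_ne_top ENNReal.ofReal_ne_top hγ) r
    _ ≤ volume (closedBall (0 : E) r) + ENNReal.ofReal x * volume (closedBall (0 : F) r) := by
      gcongr
  rw [div_le_iff₀ hcross_pos, sub_le_iff_le_add']
  simpa [Measure.real, ENNReal.toReal_add hE hswept, hx] using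
    ENNReal.toReal_mono (ENNReal.add_ne_top.2 ⟨hE, hswept⟩) htube

end Tube

/-- If the r-neighborhood of a rectifiable curve of length x (a 1-Lipschitz map on [0,x])
covers a measurable region of area P, then x ≥ (P − πr²)/(2r). -/
theorem length_ge_of_cover (r x : ℝ) (hr : 0 < r) (hx : 0 ≤ x)
    (γ : ℝ → EuclideanSpace ℝ (Fin 2)) (hγ : LipschitzOnWith 1 γ (Set.Icc 0 x))
    (P : Set (EuclideanSpace ℝ (Fin 2))) (hP : MeasurableSet P)
    (hPfin : volume P ≠ ⊤)
    (hcover : ∀ p ∈ P, ∃ t ∈ Set.Icc (0:ℝ) x, dist p (γ t) ≤ r) :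
    ((volume P).toReal - π * r ^ 2) / (2 * r) ≤ x := by
  simpa [Measure.real, hr.le, pi_nonneg, mul_comm] using length_ge_of_cover_general (F := ℝ)
    (by simp) hr hx (by simpa using eVariationOn_Icc_le_of_lipschitzOnWith hγ) hcover
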